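/- arXiv:2411.09636 — 3 statements merged into one kernel-verified Lean document; each statement's English description precedes it below -/
import Mathlib

section
/- Let Q be a real symmetric m×m matrix, λ ∈ ℝ with λI − Q positive definite, p ∈ ℝ^m, ε ∈ ℝ, K a positive integer, and ξ⁽¹⁾, …, ξ⁽ᴷ⁾ ∈ ℝ^m. Then λε² + (1/K) Σ_{k=1}^K sup_{ξ ∈ ℝ^m} [ξᵀQξ + pᵀξ − λ‖ξ − ξ⁽ᵏ⁾‖²] = λ(ε² − (1/K) Σ_{k=1}^K ‖ξ⁽ᵏ⁾‖²) + (1/(4K)) Σ_{k=1}^K (p + 2λξ⁽ᵏ⁾)ᵀ(λI − Q)⁻¹(p + 2λξ⁽ᵏ⁾), where each supremum is finite. -/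
open Matrix

/-!
Write `A = λI - Q` and `q = p + 2λx`. Expanding the squared norm turns the objective into
`-ξᵀAξ + qᵀξ - λ‖x‖²`, and completing the square gives
`(¼ qᵀA⁻¹q - λ‖x‖²) - (ξ - ½A⁻¹q)ᵀA(ξ - ½A⁻¹q)`.
Since `A` is positive definite, the supremum is attained at `ξ = ½A⁻¹q` with value
`¼ qᵀA⁻¹q - λ‖x‖²` (`isGreatest_penalized`). Averaging over the samples gives the identity.
-/

/-- Completing the square for the penalized objective, with `λ‖ξ - x‖²` written as a dot
product. -/
lemma complete_square {m : ℕ} (Q : Matrix (Fin m) (Fin m) ℝ) (lam : ℝ)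
    (hpd : (lam • (1 : Matrix (Fin m) (Fin m) ℝ) - Q).PosDef) (p x ξ q c : Fin m → ℝ)
    (hq : q = p + (2 * lam) • x)
    (hc : c = (1 / 2 : ℝ) • ((lam • (1 : Matrix (Fin m) (Fin m) ℝ) - Q)⁻¹ *ᵥ q)) :
    ξ ⬝ᵥ Q *ᵥ ξ + p ⬝ᵥ ξ - lam * ((ξ - x) ⬝ᵥ (ξ - x)) =
      (1 / 4) * (q ⬝ᵥ (lam • (1 : Matrix (Fin m) (Fin m) ℝ) - Q)⁻¹ *ᵥ q) - lam * (x ⬝ᵥ x) -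
        (ξ - c) ⬝ᵥ (lam • (1 : Matrix (Fin m) (Fin m) ℝ) - Q) *ᵥ (ξ - c) := by
  set A := lam • (1 : Matrix (Fin m) (Fin m) ℝ) - Q with hA
  have hdet : IsUnit A.det := (Matrix.isUnit_iff_isUnit_det A).mp hpd.isUnit
  have hAc : A *ᵥ c = (1 / 2 : ℝ) • q := by
    rw [hc, mulVec_smul, mulVec_mulVec, mul_nonsing_inv A hdet, one_mulVec]
  have hAT : Aᵀ = A := by
    simpa [IsHermitian, conjTranspose_eq_transpose_of_trivial] using hpd.isHermitian
  have hcA : c ⬝ᵥ A *ᵥ ξ = (1 / 2) * (q ⬝ᵥ ξ) := by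
    rw [dotProduct_mulVec, ← mulVec_transpose, hAT, hAc, smul_dotProduct, smul_eq_mul]
  have hqc : q ⬝ᵥ A⁻¹ *ᵥ q = 2 * (q ⬝ᵥ c) := by
    rw [hc, dotProduct_smul, smul_eq_mul]; ring
  have hξA : ξ ⬝ᵥ A *ᵥ ξ = lam * (ξ ⬝ᵥ ξ) - ξ ⬝ᵥ Q *ᵥ ξ := by
    rw [hA, sub_mulVec, smul_mulVec, one_mulVec, dotProduct_sub, dotProduct_smul, smul_eq_mul]
  have hqξ : q ⬝ᵥ ξ = p ⬝ᵥ ξ + 2 * lam * (x ⬝ᵥ ξ) := by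
    rw [hq, add_dotProduct, smul_dotProduct, smul_eq_mul]
  rw [hqc, mulVec_sub, hAc]
  simp only [sub_dotProduct, dotProduct_sub, dotProduct_smul, smul_eq_mul, hcA, hξA]
  rw [dotProduct_comm ξ q, dotProduct_comm c q, hqξ, dotProduct_comm ξ x]
  ring

/-- The penalized objective attains its maximum, at `½(λI - Q)⁻¹(p + 2λx)`. -/
lemma isGreatest_penalized {m : ℕ} (Q : Matrix (Fin m) (Fin m) ℝ) (lam : ℝ)
    (hpd : (lam • (1 : Matrix (Fin m) (Fin m) ℝ) - Q).PosDef)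
    (p x : EuclideanSpace ℝ (Fin m)) :
    IsGreatest {y : ℝ | ∃ ξ : EuclideanSpace ℝ (Fin m),
        y = ξ ⬝ᵥ Q *ᵥ ξ + p ⬝ᵥ ξ - lam * ‖ξ - x‖ ^ 2}
      ((1 / 4) * ((p + (2 * lam) • x) ⬝ᵥ
        (lam • (1 : Matrix (Fin m) (Fin m) ℝ) - Q)⁻¹ *ᵥ (p + (2 * lam) • x)) -
          lam * ‖x‖ ^ 2) := by
  have hn : ∀ v : EuclideanSpace ℝ (Fin m), ‖v‖ ^ 2 = v.ofLp ⬝ᵥ v.ofLp := fun v => by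
    rw [EuclideanSpace.real_norm_sq_eq]
    simp [dotProduct, sq]
  have key := fun ξ : EuclideanSpace ℝ (Fin m) =>
    complete_square Q lam hpd p.ofLp x.ofLp ξ.ofLp _ _ rfl rfl
  constructor
  · refine ⟨WithLp.toLp 2 ((1 / 2 : ℝ) • ((lam • (1 : Matrix (Fin m) (Fin m) ℝ) - Q)⁻¹ *ᵥ
      (p.ofLp + (2 * lam) • x.ofLp))), ?_⟩
    rw [hn, hn, WithLp.ofLp_sub, key]
    simp
  · rintro y ⟨ξ, rfl⟩
    rw [hn, hn, WithLp.ofLp_sub, key]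
    have h := hpd.posSemidef.dotProduct_mulVec_nonneg (ξ.ofLp - (1 / 2 : ℝ) •
      ((lam • (1 : Matrix (Fin m) (Fin m) ℝ) - Q)⁻¹ *ᵥ (p.ofLp + (2 * lam) • x.ofLp)))
    rw [star_trivial] at h
    exact sub_le_self _ h

/-- With `Q` symmetric, `λI - Q ≻ 0`, samples `ξ⁽¹⁾,…,ξ⁽ᴷ⁾`, each inner supremum
is finite and
`λε² + (1/K) ∑ₖ sup_ξ [ξᵀQξ + pᵀξ - λ‖ξ - ξ⁽ᵏ⁾‖²]
  = λ(ε² - (1/K) ∑ₖ ‖ξ⁽ᵏ⁾‖²) + (1/(4K)) ∑ₖ (p + 2λξ⁽ᵏ⁾)ᵀ(λI - Q)⁻¹(p + 2λξ⁽ᵏ⁾)`. -/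
theorem stmt_8 (m : ℕ) (Q : Matrix (Fin m) (Fin m) ℝ) (hQ : Q.IsSymm) (lam : ℝ)
    (hpd : (lam • (1 : Matrix (Fin m) (Fin m) ℝ) - Q).PosDef)
    (p : EuclideanSpace ℝ (Fin m)) (ε : ℝ) (K : ℕ) (hK : 0 < K)
    (ξs : Fin K → EuclideanSpace ℝ (Fin m)) :
    (∀ k : Fin K, BddAbove {y : ℝ | ∃ ξ : EuclideanSpace ℝ (Fin m),
        y = ξ ⬝ᵥ Q *ᵥ ξ + p ⬝ᵥ ξ - lam * ‖ξ - ξs k‖ ^ 2}) ∧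
      lam * ε ^ 2 + (1 / (K : ℝ)) *
          ∑ k : Fin K, sSup {y : ℝ | ∃ ξ : EuclideanSpace ℝ (Fin m),
            y = ξ ⬝ᵥ Q *ᵥ ξ + p ⬝ᵥ ξ - lam * ‖ξ - ξs k‖ ^ 2} =
        lam * (ε ^ 2 - (1 / (K : ℝ)) * ∑ k : Fin K, ‖ξs k‖ ^ 2) +
          (1 / (4 * (K : ℝ))) * ∑ k : Fin K,
            (p + (2 * lam) • ξs k) ⬝ᵥ
              (lam • (1 : Matrix (Fin m) (Fin m) ℝ) - Q)⁻¹ *ᵥ (p + (2 * lam) • ξs k) := by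
  refine ⟨fun k => (isGreatest_penalized Q lam hpd p (ξs k)).bddAbove, ?_⟩
  rw [Finset.sum_congr rfl fun k _ => (isGreatest_penalized Q lam hpd p (ξs k)).csSup_eq,
    Finset.sum_sub_distrib, ← Finset.mul_sum, ← Finset.mul_sum]
  have hK' : (K : ℝ) ≠ 0 := Nat.cast_ne_zero.mpr hK.ne'
  field_simp
  ring
end

section
/- Let f : ℝⁿ → ℝ be convex, let A : ℝⁿ → ℝ^m be linear, b ∈ ℝ^m, let L be a real orthogonal m×m matrix, let d₁, …, d_m, c ∈ ℝ, let K be a positive integer with vectors ξ⁽¹⁾, …, ξ⁽ᴷ⁾ ∈ ℝ^m, and set d_max = max_j d_j. Then the function (x, λ) ↦ f(x) + λ·c + (1/(4K)) Σ_{k=1}^K Σ_{j=1}^m ((L(Ax + b))_j + 2λ(Lξ⁽ᵏ⁾)_j)² / (λ − d_j) is convex on ℝⁿ × (d_max, ∞). -/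
/-!
Each summand is the quadratic-over-linear function `(u, s) ↦ u² / s`, jointly convex for `s > 0`
(`sq_div_convex`), precomposed with the map
`(x, λ) ↦ ((L(Ax + b))ⱼ + 2λ(Lξ⁽ᵏ⁾)ⱼ, λ - dⱼ)`, which is affine and has positive second component
because `λ > d_max ≥ dⱼ`. A nonnegative combination of such functions, plus the convex function `f`
and a linear term, is convex.
-/

/-- Joint convexity of `(u, s) ↦ u² / s` on `s > 0`: the right side minus the left side equals
`αβ(ut - vs)² / (st(αs + βt))`. -/
lemma sq_div_convex {u v s t α β : ℝ} (hs : 0 < s) (ht : 0 < t) (hα : 0 ≤ α) (hβ : 0 ≤ β)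
    (h : α + β = 1) :
    (α * u + β * v) ^ 2 / (α * s + β * t) ≤ α * (u ^ 2 / s) + β * (v ^ 2 / t) := by
  have hpos : 0 < α * s + β * t := by
    rcases hα.eq_or_lt with rfl | hα'
    · have : β = 1 := by linarith
      simpa [this] using ht
    · positivity
  rw [div_le_iff₀ hpos]
  have key : (α * (u ^ 2 / s) + β * (v ^ 2 / t)) * (α * s + β * t) - (α * u + β * v) ^ 2
      = α * β * (u * t - v * s) ^ 2 / (s * t) := by
    field_simp
    ring
  have : 0 ≤ α * β * (u * t - v * s) ^ 2 / (s * t) := by positivity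
  linarith

open Matrix

/-- Convexity of each agent's reformulated cost
`(x, λ) ↦ f(x) + λc + (1/(4K)) ∑ₖ ∑ⱼ ((L(Ax + b))ⱼ + 2λ(Lξ⁽ᵏ⁾)ⱼ)²/(λ - dⱼ)`
on `ℝⁿ × (d_max, ∞)`, where `f` is convex, `A` is linear, `L` is orthogonal and
`d_max = max_j d_j`. -/
theorem stmt_11 (n m : ℕ) (hm : 0 < m) (f : EuclideanSpace ℝ (Fin n) → ℝ)
    (hf : ConvexOn ℝ (Set.univ : Set (EuclideanSpace ℝ (Fin n))) f)
    (A : EuclideanSpace ℝ (Fin n) →ₗ[ℝ] EuclideanSpace ℝ (Fin m))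
    (b : EuclideanSpace ℝ (Fin m)) (L : Matrix (Fin m) (Fin m) ℝ) (hL : Lᵀ * L = 1)
    (d : Fin m → ℝ) (c : ℝ) (K : ℕ) (hK : 0 < K) (ξs : Fin K → EuclideanSpace ℝ (Fin m)) :
    ConvexOn ℝ ((Set.univ : Set (EuclideanSpace ℝ (Fin n))) ×ˢ Set.Ioi (sSup (Set.range d)))
      (fun p : EuclideanSpace ℝ (Fin n) × ℝ =>
        f p.1 + p.2 * c + (1 / (4 * (K : ℝ))) *
          ∑ k : Fin K, ∑ j : Fin m,
            ((L *ᵥ (A p.1 + b)) j + 2 * p.2 * (L *ᵥ ξs k) j) ^ 2 / (p.2 - d j)) := by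
  refine ⟨convex_univ.prod (convex_Ioi _), ?_⟩
  rintro ⟨x, r⟩ ⟨-, hr⟩ ⟨y, q⟩ ⟨-, hq⟩ α β hα hβ hab
  have hd : ∀ j, d j ≤ sSup (Set.range d) := fun j =>
    le_csSup (Set.finite_range d).bddAbove (Set.mem_range_self j)
  have hfx := hf.2 (Set.mem_univ x) (Set.mem_univ y) hα hβ hab
  simp only [Set.mem_Ioi] at hr hq
  simp only [Prod.smul_mk, Prod.mk_add_mk, smul_eq_mul] at hfx ⊢
  have hsum : ∑ k : Fin K, ∑ j : Fin m,
        ((L *ᵥ (A (α • x + β • y) + b)) j + 2 * (α * r + β * q) * (L *ᵥ ξs k) j) ^ 2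
          / (α * r + β * q - d j)
      ≤ α * (∑ k : Fin K, ∑ j : Fin m,
          ((L *ᵥ (A x + b)) j + 2 * r * (L *ᵥ ξs k) j) ^ 2 / (r - d j))
        + β * (∑ k : Fin K, ∑ j : Fin m,
          ((L *ᵥ (A y + b)) j + 2 * q * (L *ᵥ ξs k) j) ^ 2 / (q - d j)) := by
    simp only [Finset.mul_sum, ← Finset.sum_add_distrib]
    refine Finset.sum_le_sum fun k _ => Finset.sum_le_sum fun j _ => ?_
    have hs : 0 < r - d j := by linarith [hd j]
    have ht : 0 < q - d j := by linarith [hd j]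
    -- `α + β = 1` lets the constants `b` and `d j` be distributed over the convex combination.
    have e1 : (L *ᵥ (A (α • x + β • y) + b)) j + 2 * (α * r + β * q) * (L *ᵥ ξs k) j
        = α * ((L *ᵥ (A x + b)) j + 2 * r * (L *ᵥ ξs k) j)
          + β * ((L *ᵥ (A y + b)) j + 2 * q * (L *ᵥ ξs k) j) := by
      simp only [map_add, map_smul, WithLp.ofLp_add, WithLp.ofLp_smul, Matrix.mulVec_add,
        Matrix.mulVec_smul, Pi.add_apply, Pi.smul_apply, smul_eq_mul]
      linear_combination (-(L *ᵥ b) j) * hab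
    have e2 : α * r + β * q - d j = α * (r - d j) + β * (q - d j) := by
      linear_combination (d j) * hab
    rw [e1, e2]
    exact sq_div_convex hs ht hα hβ hab
  have hK' : 0 ≤ 1 / (4 * (K : ℝ)) := by positivity
  have := mul_le_mul_of_nonneg_left hsum hK'
  linarith
end

section
/- Let ι be a finite index set, and for each i ∈ ι let E_i be a finite-dimensional real inner product space and Z_i ⊆ E_i a convex set; write Z = Π_i Z_i ⊆ Π_i E_i. For each i ∈ ι let J_i : (Π_j E_j) → ℝ. Let z* ∈ Z and suppose: (a) for each i, the function y ↦ J_i(z* with i-th component replaced by y) is convex on Z_i and has gradient g_i at z*_i; (b) there is a convex neighborhood V of z* in Π_j E_j such that Σ_i ⟨g_i, z_i − z*_i⟩ ≥ 0 for all z ∈ Z ∩ V. Then z* is a Nash equilibrium: for every i ∈ ι and every y ∈ Z_i, J_i(z*) ≤ J_i(z* with i-th component replaced by y). -/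
/-!
A local variational inequality is enough because only directional information is used: moving
agent `i` a small step `t > 0` from `z*_i` towards `y` stays in `Z` by convexity and in `V` for
small `t`, so the inequality gives `t ⟪g_i, y - z*_i⟫ ≥ 0`. The first-order lower bound for convex
functions (`ConvexOn.inner_gradient_le`) then turns this into `J_i(z*) ≤ J_i(z*[i ↦ y])`.
-/

open RealInnerProductSpace
open Filter Topology

/-- A convex function lies above its linearization. The point `x` need not be interior to `s`:
only the slopes along the segment from `x` to `y` are compared with the derivative. -/
theorem ConvexOn.inner_gradient_le {F : Type*} [NormedAddCommGroup F] [InnerProductSpace ℝ F]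
    [CompleteSpace F] {s : Set F} {f : F → ℝ} {g x y : F} (hf : ConvexOn ℝ s f)
    (hg : HasGradientAt f g x) (hx : x ∈ s) (hy : y ∈ s) : ⟪g, y - x⟫ ≤ f y - f x := by
  have hd : HasDerivAt (fun t : ℝ => f (x + t • (y - x))) ⟪g, y - x⟫ 0 := by
    have h := hg.hasFDerivAt.hasLineDerivAt (y - x)
    simpa [HasLineDerivAt] using h
  refine le_of_tendsto hd.tendsto_slope_zero_right ?_
  filter_upwards [Ioo_mem_nhdsGT (zero_lt_one' ℝ)] with t ht
  have hc := hf.2 hx hy (sub_nonneg.2 ht.2.le) ht.1.le (sub_add_cancel 1 t)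
  have hp : (1 - t) • x + t • y = x + t • (y - x) := by module
  rw [hp] at hc
  simp only [smul_eq_mul, zero_add, zero_smul, add_zero] at hc ⊢
  rw [inv_mul_le_iff₀ ht.1]
  linarith

/-- If for each agent `i` the cost `y ↦ J_i(z* with i-th component y)` is convex
on the convex strategy set `Z_i` with gradient `g_i` at `z*_i`, and `z*` is a local solution of
the variational inequality with mapping `(g_i)_i` on a convex neighborhood `V` of `z*`, then
`z*` is a Nash equilibrium. -/
theorem stmt_13 {ι : Type*} [Fintype ι] [DecidableEq ι] {E : ι → Type*}
    [∀ i, NormedAddCommGroup (E i)] [∀ i, InnerProductSpace ℝ (E i)]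
    [∀ i, FiniteDimensional ℝ (E i)]
    (Z : ∀ i, Set (E i)) (hZ : ∀ i, Convex ℝ (Z i))
    (J : ι → (∀ j, E j) → ℝ) (zstar : ∀ j, E j) (hzstar : ∀ i, zstar i ∈ Z i)
    (g : ∀ i, E i)
    (hconv : ∀ i, ConvexOn ℝ (Z i) (fun y => J i (Function.update zstar i y)))
    (hgrad : ∀ i, HasGradientAt (fun y => J i (Function.update zstar i y)) (g i) (zstar i))
    (V : Set (∀ j, E j)) (hVconv : Convex ℝ V) (hV : V ∈ nhds zstar)
    (hVI : ∀ z : ∀ j, E j, (∀ i, z i ∈ Z i) → z ∈ V → 0 ≤ ∑ i, ⟪g i, z i - zstar i⟫) :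
    ∀ i, ∀ y ∈ Z i, J i zstar ≤ J i (Function.update zstar i y) := by
  intro i y hy
  have hconvex := (hconv i).inner_gradient_le (hgrad i) (hzstar i) hy
  simp only [Function.update_eq_self] at hconvex
  suffices h : 0 ≤ ⟪g i, y - zstar i⟫ by linarith
  have hcont : Tendsto (fun t : ℝ => Function.update zstar i (zstar i + t • (y - zstar i)))
      (𝓝[>] 0) (𝓝 zstar) := by
    have hc : Continuous
        (fun t : ℝ => Function.update zstar i (zstar i + t • (y - zstar i))) :=
      continuous_const.update i (by fun_prop)
    simpa using (hc.tendsto 0).mono_left nhdsWithin_le_nhds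
  obtain ⟨t, htV, ht⟩ :=
    ((hcont.eventually_mem hV).and (Ioo_mem_nhdsGT (zero_lt_one' ℝ))).exists
  have hVIt := hVI _ (fun j => ?_) htV
  -- Every summand other than the `i`-th vanishes.
  · rw [Finset.sum_eq_single i (fun j _ hj => by simp [hj]) (by simp)] at hVIt
    simp only [Function.update_self, add_sub_cancel_left, inner_smul_right] at hVIt
    exact nonneg_of_mul_nonneg_right hVIt ht.1
  · rcases eq_or_ne j i with rfl | hj
    · simpa using (hZ j).add_smul_sub_mem (hzstar j) hy ⟨ht.1.le, ht.2.le⟩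
    · simpa [hj] using hzstar j
end
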